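/- For every g ∈ SL_n(F((t))) there exist a unique permutation σ ∈ S_n and a unique vector a ∈ ℤ^n with Σ_k a_k = 0 such that g ∈ I·m·I for some monomial matrix m ∈ SL_n(F((t))) whose nonzero entries are exactly m_{σ(k),k} = ε_k·t^{a_k} with ε_k ∈ {1,−1}; uniqueness means that if m and m' are such monomial matrices attached to (σ,a) and (σ',a') and the double cosets I·m·I and I·m'·I intersect, then (σ,a) = (σ',a'). Thus I\SL_n(F((t)))/I is in bijection with the affine Weyl group. -/

import Mathlib

/-!
Iwahori–Bruhat decomposition for `SL_n(F((t)))`: the double cosets of the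
Iwahori subgroup `I` are parametrized by the affine Weyl group, i.e. by pairs
`(σ, a)` with `σ ∈ S_n` and `a ∈ ℤ^n`, `Σ a_k = 0`.
-/

noncomputable section

/-- `f ∈ F[[t]]`, i.e. the Laurent series `f` has no negative coefficients. -/
def LaurentIsIntegral (F : Type) [Field F] (f : LaurentSeries F) : Prop :=
  ∀ m : ℤ, m < 0 → f.coeff m = 0

/-- The local parameter `t` of `F((t))`. -/
def tparam (F : Type) [Field F] : LaurentSeries F := HahnSeries.single 1 1

/-- The Iwahori subgroup of `SL_n(F((t)))`: matrices with entries in `F[[t]]`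
whose reduction mod `t` is upper triangular. -/
def Iwahori (F : Type) [Field F] (n : ℕ) :
    Set (Matrix.SpecialLinearGroup (Fin n) (LaurentSeries F)) :=
  {g | (∀ i j : Fin n, LaurentIsIntegral F ((g : Matrix (Fin n) (Fin n) (LaurentSeries F)) i j)) ∧
    ∀ i j : Fin n, j < i → ((g : Matrix (Fin n) (Fin n) (LaurentSeries F)) i j).coeff 0 = 0}

/-- `m` is a monomial matrix attached to `(σ, a)`: its nonzero entries are exactly
`m_{σ k, k} = ε_k · t^{a_k}` with signs `ε_k ∈ {1, -1}`. -/
def IsAffineLifting (F : Type) [Field F] (n : ℕ) (σ : Equiv.Perm (Fin n))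
    (a : Fin n → ℤ) (m : Matrix.SpecialLinearGroup (Fin n) (LaurentSeries F)) : Prop :=
  ∃ ε : Fin n → LaurentSeries F, (∀ k, ε k = 1 ∨ ε k = -1) ∧
    ∀ i k : Fin n, (m : Matrix (Fin n) (Fin n) (LaurentSeries F)) i k =
      if i = σ k then ε k * (tparam F) ^ (a k) else 0

/-!
Among the nonzero entries of `g` that are not alone in their row and column, pick one of maximal
valuation, in the lowest possible row and then in the leftmost possible column. Clearing its column
and row uses only multipliers that the Iwahori subgroup allows: integral ones everywhere, of
valuation less than one below and to the left of the pivot. Repeating this makes `g` monomial, and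
a monomial matrix can be normalised by a diagonal matrix of units.

Conversely, let `x m = m' y` with `x`, `y` Iwahori and `m`, `m'` monomial with entries `u k` and
`u' k`, and put `τ = σ'⁻¹ σ`. Comparing entries gives `v (u k) = v (u' (τ k)) * v (y (τ k) k)`. Both
determinants are one, so the integral entries `y (τ k) k` have valuations with product one and are
units. As `y` is upper triangular modulo the maximal ideal, `τ k ≤ k` for all `k`, hence `τ = 1`.
-/

open Matrix DoubleCoset
open scoped WithZero

section Products

theorem prod_zpow_eq_zpow_sum₀ {ι G : Type*} [CommGroupWithZero G] {x : G} (hx : x ≠ 0)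
    (s : Finset ι) (a : ι → ℤ) : ∏ k ∈ s, x ^ a k = x ^ ∑ k ∈ s, a k := by
  classical
  induction s using Finset.induction_on with
  | empty => simp
  | insert k s hk ih => rw [Finset.prod_insert hk, Finset.sum_insert hk, zpow_add₀ hx, ih]

theorem exists_prod_eq_sign {ι : Type*} [Fintype ι] [DecidableEq ι] (σ : Equiv.Perm ι) :
    ∃ ε : ι → ℤˣ, ∏ k, ε k = σ.sign := by
  cases isEmpty_or_nonempty ι with
  | inl _ => exact ⟨1, by simp [Subsingleton.elim σ 1]⟩
  | inr h => exact ⟨Pi.mulSingle h.some σ.sign, Fintype.prod_pi_mulSingle' _ _⟩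

theorem perm_eq_one_of_forall_le {ι : Type*} [LinearOrder ι] [WellFoundedLT ι]
    {τ : Equiv.Perm ι} (h : ∀ k, τ k ≤ k) : τ = 1 := by
  ext k
  induction k using WellFoundedLT.induction with
  | ind k ih => exact (h k).eq_or_lt.elim id fun hk => τ.injective (ih (τ k) hk)

end Products

section MonomialMatrix

variable {ι R : Type*} [DecidableEq ι]

/-- The monomial matrix with entry `u k` in position `(σ k, k)` and zeros elsewhere. -/
def monomialMatrix [Zero R] (σ : Equiv.Perm ι) (u : ι → R) : Matrix ι ι R :=
  of fun i k => if i = σ k then u k else 0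

variable [Fintype ι]

theorem mul_monomialMatrix_apply [NonUnitalNonAssocSemiring R] (A : Matrix ι ι R)
    (σ : Equiv.Perm ι) (u : ι → R) (i k : ι) :
    (A * monomialMatrix σ u) i k = A i (σ k) * u k := by
  simp [monomialMatrix, Matrix.mul_apply]

theorem monomialMatrix_mul_apply [NonUnitalNonAssocSemiring R] (A : Matrix ι ι R)
    (σ : Equiv.Perm ι) (u : ι → R) (l k : ι) :
    (monomialMatrix σ u * A) (σ l) k = u l * A l k := by
  simp [monomialMatrix, Matrix.mul_apply]

theorem monomialMatrix_mul_diagonal [NonUnitalNonAssocSemiring R] (σ : Equiv.Perm ι)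
    (u w : ι → R) : monomialMatrix σ u * diagonal w = monomialMatrix σ (u * w) := by
  ext i k
  simp [monomialMatrix]

theorem det_monomialMatrix [CommRing R] (σ : Equiv.Perm ι) (u : ι → R) :
    (monomialMatrix σ u).det = σ.sign * ∏ k, u k := by
  have hperm : monomialMatrix σ u = (diagonal fun i => u (σ.symm i)).submatrix id σ := by
    ext i k
    by_cases h : i = σ k <;> simp [monomialMatrix, h]
  rw [hperm, det_permute', det_diagonal, Equiv.prod_comp σ.symm u]

end MonomialMatrix

section IsolatedEntries

variable {ι κ R : Type*}

/-- The entry of `A` in position `(i, k)` is nonzero, and it is the only nonzero entry in its row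
and in its column. Elimination stops once every nonzero entry is isolated. -/
structure IsIsolated [Zero R] (A : Matrix ι κ R) (i : ι) (k : κ) : Prop where
  ne_zero : A i k ≠ 0
  col_eq_zero : ∀ j ≠ i, A j k = 0
  row_eq_zero : ∀ l ≠ k, A i l = 0

theorem exists_eq_monomialMatrix [Fintype ι] [DecidableEq ι] [CommRing R] {A : Matrix ι ι R}
    (hdet : A.det ≠ 0) (hA : ∀ i k, A i k ≠ 0 → IsIsolated A i k) :
    ∃ σ u, A = monomialMatrix σ u := by
  have hcol (k : ι) : ∃ i, A i k ≠ 0 := by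
    by_contra! h
    exact hdet (det_eq_zero_of_column_eq_zero k h)
  choose s hs using hcol
  have hinj : Function.Injective s := fun k l hkl => by
    by_contra hne
    exact hs l (hkl ▸ (hA _ _ (hs k)).row_eq_zero l (Ne.symm hne))
  refine ⟨.ofBijective s (Finite.injective_iff_bijective.1 hinj), fun k => A (s k) k, ?_⟩
  ext i k
  by_cases hi : i = s k
  · simp [monomialMatrix, hi]
  · simp [monomialMatrix, hi, (hA _ _ (hs k)).col_eq_zero i hi]

theorem IsIsolated.of_eliminate {K : Type*} [Field K] {A B : Matrix ι κ K}
    {i j : ι} {k l : κ}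
    (hB : IsIsolated B i k) (hrest : ∀ j ≠ i, ∀ l, B j l = A j l - A j k * A i l / A i k)
    (hne : A i k ≠ 0) (hA : IsIsolated A j l) : IsIsolated B j l := by
  by_cases hji : j = i
  · subst hji
    have hkl : k = l := by_contra fun hkl => hne (hA.row_eq_zero k hkl)
    exact hkl ▸ hB
  have hil : A i l = 0 := hA.col_eq_zero i (Ne.symm hji)
  have hlk : l ≠ k := fun hlk => hne (hlk ▸ hil)
  have hjk : A j k = 0 := hA.row_eq_zero k hlk.symm
  refine ⟨?_, fun j' hj' => ?_, fun l' hl' => ?_⟩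
  · simpa [hrest j hji, hil] using hA.ne_zero
  · obtain rfl | hj'i := eq_or_ne j' i
    · exact hB.row_eq_zero l hlk
    · simp [hrest j' hj'i, hil, hA.col_eq_zero j' hj']
  · simp [hrest j hji, hjk, hA.row_eq_zero l' hl']

end IsolatedEntries

section RankOne

variable {ι R : Type*} [Fintype ι] [DecidableEq ι] [CommRing R]

/-- The element `1 + u wᵀ` of the special linear group, for orthogonal vectors `u` and `w`. With
`w` a basis vector it performs simultaneous row operations with one pivot row; with `u` a basis
vector, simultaneous column operations with one pivot column. -/
def oneAddVecMulVec (u w : ι → R) (h : w ⬝ᵥ u = 0) : Matrix.SpecialLinearGroup ι R :=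
  ⟨1 + vecMulVec u w, by
    rw [vecMulVec_eq Unit, det_one_add_replicateCol_mul_replicateRow, h, add_zero]⟩

theorem coe_oneAddVecMulVec (u w : ι → R) (h : w ⬝ᵥ u = 0) :
    (oneAddVecMulVec u w h : Matrix ι ι R) = 1 + vecMulVec u w := rfl

end RankOne

section Iwahori

/-- The upper triangular subgroup of the special linear group. -/
def borelSubgroup (ι R : Type*) [Fintype ι] [LinearOrder ι] [CommRing R] :
    Subgroup (Matrix.SpecialLinearGroup ι R) where
  carrier := {g | (g : Matrix ι ι R).IsUpperTriangular}
  one_mem' := blockTriangular_one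
  mul_mem' := BlockTriangular.mul
  inv_mem' {g} hg := by
    have : Invertible (g : Matrix ι ι R) :=
      invertibleOfIsUnitDet _ (by simp)
    have hinv := blockTriangular_inv_of_blockTriangular hg
    rwa [inv_def, g.det_coe, Ring.inverse_one, one_smul] at hinv

variable {ι μ K Γ₀ : Type*} [Fintype ι] [LinearOrder ι] [Field K]
  [LinearOrderedCommGroupWithZero Γ₀] (v : Valuation K Γ₀)

/-- The Iwahori subgroup of the special linear group of a valued field: the matrices over the
valuation ring whose reduction to the residue field is upper triangular. -/
def iwahoriSubgroup (ι : Type*) [Fintype ι] [LinearOrder ι] :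
    Subgroup (Matrix.SpecialLinearGroup ι K) :=
  ((borelSubgroup ι (IsLocalRing.ResidueField v.valuationSubring)).comap
    (Matrix.SpecialLinearGroup.map (IsLocalRing.residue v.valuationSubring))).map
      (Matrix.SpecialLinearGroup.map v.valuationSubring.subtype)

variable {v}

theorem residue_eq_zero_iff_val_lt_one (x : v.valuationSubring) :
    IsLocalRing.residue v.valuationSubring x = 0 ↔ v x < 1 := by
  rw [IsLocalRing.residue_eq_zero_iff, Valuation.mem_maximalIdeal_iff]

theorem mem_iwahoriSubgroup {g : Matrix.SpecialLinearGroup ι K} :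
    g ∈ iwahoriSubgroup v ι ↔ (∀ i j, v (g i j) ≤ 1) ∧ ∀ i j, j < i → v (g i j) < 1 := by
  constructor
  · rintro ⟨P, hP, rfl⟩
    exact ⟨fun i j => (P i j).2, fun i j hij => (residue_eq_zero_iff_val_lt_one _).1 (hP hij)⟩
  · rintro ⟨hint, hlt⟩
    let P : Matrix ι ι v.valuationSubring := of fun i j => ⟨g i j, hint i j⟩
    have hP : v.valuationSubring.subtype.mapMatrix P = g := rfl
    have hdet : P.det = 1 := Subtype.val_injective <| by
      have := v.valuationSubring.subtype.map_det P
      rwa [hP, g.det_coe] at this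
    exact ⟨⟨P, hdet⟩, fun i j hij => (residue_eq_zero_iff_val_lt_one _).2 (hlt i j hij),
      Subtype.ext hP⟩

theorem val_diag_eq_one {g : Matrix.SpecialLinearGroup ι K} (hg : g ∈ iwahoriSubgroup v ι) (i : ι) :
    v (g i i) = 1 := by
  obtain ⟨P, hP, rfl⟩ := hg
  have hprod := det_of_isUpperTriangular hP
  rw [Matrix.SpecialLinearGroup.det_coe] at hprod
  refine le_antisymm (P i i).2 (not_lt.1 fun hlt => one_ne_zero (hprod.trans ?_))
  exact Finset.prod_eq_zero (Finset.mem_univ i) ((residue_eq_zero_iff_val_lt_one _).2 hlt)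

theorem mem_iwahoriSubgroup_of_coe_eq_diagonal {g : Matrix.SpecialLinearGroup ι K} {w : ι → K}
    (hg : (g : Matrix ι ι K) = diagonal w) (hw : ∀ k, v (w k) = 1) : g ∈ iwahoriSubgroup v ι := by
  refine mem_iwahoriSubgroup.2 ⟨fun i j => ?_, fun i j hij => ?_⟩
  · rw [hg]
    obtain rfl | hij := eq_or_ne i j
    · simp [hw]
    · simp [hij]
  · simp [hg, hij.ne']

theorem oneAddVecMulVec_mem_iwahoriSubgroup {u w : ι → K} (h : w ⬝ᵥ u = 0)
    (hle : ∀ i j, v (u i * w j) ≤ 1) (hlt : ∀ i j, j < i → v (u i * w j) < 1) :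
    oneAddVecMulVec u w h ∈ iwahoriSubgroup v ι := by
  refine mem_iwahoriSubgroup.2 ⟨fun i j => ?_, fun i j hij => ?_⟩ <;>
    rw [coe_oneAddVecMulVec, Matrix.add_apply, vecMulVec_apply]
  · refine v.map_add_le ?_ (hle i j)
    obtain rfl | hij := eq_or_ne i j <;> simp [*]
  · simpa [Matrix.one_apply_ne hij.ne'] using hlt i j hij

theorem exists_row_operation {c : ι → K} {i : ι} (hi : c i = 0) (hle : ∀ j, v (c j) ≤ 1)
    (hlt : ∀ j, i < j → v (c j) < 1) :
    ∃ x ∈ iwahoriSubgroup v ι, ∀ (B : Matrix ι μ K) j l,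
      ((x : Matrix ι ι K) * B) j l = B j l + c j * B i l := by
  refine ⟨oneAddVecMulVec c (Pi.single i 1) (by simpa using hi),
    oneAddVecMulVec_mem_iwahoriSubgroup _ (fun a b => ?_) (fun a b hba => ?_), fun B j l => ?_⟩
  · obtain rfl | hb := eq_or_ne b i <;> simp [*]
  · obtain rfl | hb := eq_or_ne b i <;> simp [*]
  · simp [coe_oneAddVecMulVec, Matrix.add_mul, vecMulVec_mul, vecMulVec_apply]

theorem exists_col_operation {r : ι → K} {k : ι} (hk : r k = 0) (hle : ∀ l, v (r l) ≤ 1)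
    (hlt : ∀ l, l < k → v (r l) < 1) :
    ∃ y ∈ iwahoriSubgroup v ι, ∀ (B : Matrix μ ι K) j l,
      (B * (y : Matrix ι ι K)) j l = B j l + B j k * r l := by
  refine ⟨oneAddVecMulVec (Pi.single k 1) r (by simpa using hk),
    oneAddVecMulVec_mem_iwahoriSubgroup _ (fun a b => ?_) (fun a b hba => ?_), fun B j l => ?_⟩
  · obtain rfl | ha := eq_or_ne a k <;> simp [*]
  · obtain rfl | ha := eq_or_ne a k <;> simp [*]
  · simp [coe_oneAddVecMulVec, Matrix.mul_add, mul_vecMulVec, vecMulVec_apply]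

end Iwahori

section Elimination

variable {ι κ K Γ₀ : Type*} [LinearOrder ι] [LinearOrder κ] [Field K]
  [LinearOrderedCommGroupWithZero Γ₀] {v : Valuation K Γ₀}

variable (v) in
/-- A position of `A` from which the rest of its row and column can be eliminated by multiplying
with Iwahori matrices: the entry has maximal valuation in its row and column, strictly larger than
that of the entries below it and to its left. -/
structure IsIwahoriPivot (A : Matrix ι κ K) (i : ι) (k : κ) : Prop where
  ne_zero : A i k ≠ 0
  col_le : ∀ j, v (A j k) ≤ v (A i k)
  col_lt : ∀ j, i < j → v (A j k) < v (A i k)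
  row_le : ∀ l, v (A i l) ≤ v (A i k)
  row_lt : ∀ l, l < k → v (A i l) < v (A i k)

theorem exists_isIwahoriPivot [Finite ι] [Finite κ] {A : Matrix ι κ K}
    (hA : ∃ i k, A i k ≠ 0 ∧ ¬ IsIsolated A i k) :
    ∃ i k, IsIwahoriPivot v A i k ∧ ¬ IsIsolated A i k := by
  let S : Set (ι × κ) := {p | A p.1 p.2 ≠ 0 ∧ ¬ IsIsolated A p.1 p.2}
  have hS : S.Nonempty := let ⟨i, k, h⟩ := hA; ⟨(i, k), h⟩
  -- Among the entries of maximal valuation, take the lowest row, then the leftmost column.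
  obtain ⟨⟨i, k⟩, ⟨hne, hiso⟩, hmax⟩ := S.exists_max_image
    (fun p => toLex (v (A p.1 p.2), toLex (p.1, OrderDual.toDual p.2))) S.toFinite hS
  have hmax' (j l) (hjl : A j l = 0 ∨ (j, l) ∈ S) :
      v (A j l) < v (A i k) ∨ v (A j l) = v (A i k) ∧ (j < i ∨ j = i ∧ k ≤ l) := by
    obtain h0 | hmem := hjl
    · exact .inl (by simpa [h0] using (v.pos_iff).2 hne)
    · simpa [Prod.Lex.toLex_le_toLex] using hmax (j, l) hmem
  have hcol (j) : v (A j k) < v (A i k) ∨ v (A j k) = v (A i k) ∧ j ≤ i := by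
    obtain rfl | hj := eq_or_ne j i
    · exact .inr ⟨rfl, le_rfl⟩
    · have := hmax' j k (or_iff_not_imp_left.2 fun h0 =>
        ⟨h0, fun h => hne (h.col_eq_zero i hj.symm)⟩)
      grind
  have hrow (l) : v (A i l) < v (A i k) ∨ v (A i l) = v (A i k) ∧ k ≤ l := by
    obtain rfl | hl := eq_or_ne l k
    · exact .inr ⟨rfl, le_rfl⟩
    · have := hmax' i l (or_iff_not_imp_left.2 fun h0 =>
        ⟨h0, fun h => hne (h.row_eq_zero k hl.symm)⟩)
      grind
  exact ⟨i, k, ⟨hne, fun j => (hcol j).elim le_of_lt fun h => h.1.le,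
    fun j hij => (hcol j).resolve_right fun h => h.2.not_gt hij,
    fun l => (hrow l).elim le_of_lt fun h => h.1.le,
    fun l hlk => (hrow l).resolve_right fun h => h.2.not_gt hlk⟩, hiso⟩

namespace IsIwahoriPivot

variable {A : Matrix ι κ K} {i : ι} {k : κ}

theorem exists_clear_col [Fintype ι] (h : IsIwahoriPivot v A i k) :
    ∃ x ∈ iwahoriSubgroup v ι, ∀ (B : Matrix ι κ K) j l,
      ((x : Matrix ι ι K) * B) j l = B j l - (if j = i then 0 else A j k / A i k) * B i l := by
  have hpos : 0 < v (A i k) := (v.pos_iff).2 h.ne_zero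
  obtain ⟨x, hx, hxB⟩ := exists_row_operation (v := v) (μ := κ) (i := i)
    (c := fun j => -if j = i then 0 else A j k / A i k) (by simp)
    (fun j => by split_ifs <;> simp [div_le_one₀ hpos, h.col_le])
    (fun j hij => by simp [hij.ne', div_lt_one₀ hpos, h.col_lt j hij])
  exact ⟨x, hx, fun B j l => by rw [hxB, neg_mul, sub_eq_add_neg]⟩

theorem exists_clear_row [Fintype κ] (h : IsIwahoriPivot v A i k) :
    ∃ y ∈ iwahoriSubgroup v κ, ∀ (B : Matrix ι κ K) j l,
      (B * (y : Matrix κ κ K)) j l = B j l - B j k * if l = k then 0 else A i l / A i k := by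
  have hpos : 0 < v (A i k) := (v.pos_iff).2 h.ne_zero
  obtain ⟨y, hy, hyB⟩ := exists_col_operation (v := v) (μ := ι) (k := k)
    (r := fun l => -if l = k then 0 else A i l / A i k) (by simp)
    (fun l => by split_ifs <;> simp [div_le_one₀ hpos, h.row_le])
    (fun l hlk => by simp [hlk.ne, div_lt_one₀ hpos, h.row_lt l hlk])
  exact ⟨y, hy, fun B j l => by rw [hyB, mul_neg, sub_eq_add_neg]⟩

theorem exists_eliminate [Fintype ι] [Fintype κ] (h : IsIwahoriPivot v A i k) :
    ∃ x ∈ iwahoriSubgroup v ι, ∃ y ∈ iwahoriSubgroup v κ,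
      IsIsolated ((x : Matrix ι ι K) * A * (y : Matrix κ κ K)) i k ∧
        ∀ j ≠ i, ∀ l, ((x : Matrix ι ι K) * A * (y : Matrix κ κ K)) j l =
          A j l - A j k * A i l / A i k := by
  obtain ⟨x, hx, hxB⟩ := h.exists_clear_col
  obtain ⟨y, hy, hyB⟩ := h.exists_clear_row
  have hne := h.ne_zero
  have hpivotRow (l : κ) : ((x : Matrix ι ι K) * A) i l = A i l := by simp [hxB]
  have hpivotCol (j : ι) (hj : j ≠ i) : ((x : Matrix ι ι K) * A) j k = 0 := by
    simp [hxB, hj, hne]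
  have hrest (j : ι) (hj : j ≠ i) (l : κ) :
      ((x : Matrix ι ι K) * A * (y : Matrix κ κ K)) j l = A j l - A j k * A i l / A i k := by
    rw [hyB, hpivotCol j hj, hxB, if_neg hj]
    ring
  refine ⟨x, hx, y, hy, ⟨?_, fun j hj => ?_, fun l hl => ?_⟩, hrest⟩
  · simpa [hyB, hpivotRow] using hne
  · rw [hrest j hj, mul_div_cancel_right₀ _ hne, sub_self]
  · rw [hyB, hpivotRow, hpivotRow, if_neg hl, mul_div_cancel₀ _ hne, sub_self]

end IsIwahoriPivot

variable (v) in
theorem exists_mul_mul_isIsolated [Fintype ι] [Fintype κ] (A : Matrix ι κ K) :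
    ∃ x ∈ iwahoriSubgroup v ι, ∃ y ∈ iwahoriSubgroup v κ, ∀ i k,
      ((x : Matrix ι ι K) * A * (y : Matrix κ κ K)) i k ≠ 0 →
        IsIsolated ((x : Matrix ι ι K) * A * (y : Matrix κ κ K)) i k := by
  induction hS : {p : ι × κ | IsIsolated A p.1 p.2} using WellFoundedGT.induction
    generalizing A with
  | ind S ih =>
  by_cases hA : ∃ i k, A i k ≠ 0 ∧ ¬ IsIsolated A i k
  · obtain ⟨i, k, hpivot, hik⟩ := exists_isIwahoriPivot (v := v) hA
    obtain ⟨x, hx, y, hy, hiso, hrest⟩ := hpivot.exists_eliminate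
    have hlt : S < {p : ι × κ | IsIsolated (x.1 * A * y.1) p.1 p.2} := by
      subst hS
      exact ⟨fun p hp => hiso.of_eliminate hrest hpivot.ne_zero hp,
        fun hsub => hik (hsub (a := (i, k)) hiso)⟩
    obtain ⟨x', hx', y', hy', hall⟩ := ih _ hlt _ rfl
    refine ⟨x' * x, mul_mem hx' hx, y * y', mul_mem hy hy', ?_⟩
    simpa only [Matrix.SpecialLinearGroup.coe_mul, Matrix.mul_assoc] using hall
  · push Not at hA
    exact ⟨1, one_mem _, 1, one_mem _, by simpa using hA⟩

end Elimination

section MonomialValuations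

variable {ι K Γ₀ : Type*} [Fintype ι] [DecidableEq ι] [Field K]
  [LinearOrderedCommGroupWithZero Γ₀] {v : Valuation K Γ₀}

theorem prod_val_eq_one_of_coe_eq_monomialMatrix {m : Matrix.SpecialLinearGroup ι K}
    {σ : Equiv.Perm ι} {u : ι → K} (hm : (m : Matrix ι ι K) = monomialMatrix σ u) :
    ∏ k, v (u k) = 1 := by
  have hdet := m.det_coe
  rw [hm, det_monomialMatrix] at hdet
  obtain hσ | hσ := Int.units_eq_one_or σ.sign <;> simpa [hσ] using congr_arg v hdet

theorem val_ne_zero_of_coe_eq_monomialMatrix {m : Matrix.SpecialLinearGroup ι K}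
    {σ : Equiv.Perm ι} {u : ι → K} (hm : (m : Matrix ι ι K) = monomialMatrix σ u) (k : ι) :
    v (u k) ≠ 0 :=
  Finset.prod_ne_zero_iff.1
    ((prod_val_eq_one_of_coe_eq_monomialMatrix hm).trans_ne one_ne_zero) k (Finset.mem_univ k)

end MonomialValuations

section DoubleCosets

variable {ι K Γ₀ : Type*} [Fintype ι] [LinearOrder ι] [Field K]
  [LinearOrderedCommGroupWithZero Γ₀] {v : Valuation K Γ₀}

variable (v) in
theorem exists_monomial_mem_doubleCoset (g : Matrix.SpecialLinearGroup ι K) :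
    ∃ σ u, ∃ m : Matrix.SpecialLinearGroup ι K, (m : Matrix ι ι K) = monomialMatrix σ u ∧
      m ∈ doubleCoset g (iwahoriSubgroup v ι) (iwahoriSubgroup v ι) := by
  obtain ⟨x, hx, y, hy, hxy⟩ := exists_mul_mul_isIsolated v (g : Matrix ι ι K)
  obtain ⟨σ, u, hm⟩ := exists_eq_monomialMatrix (by simp) hxy
  exact ⟨σ, u, x * g * y, hm, mem_doubleCoset.2 ⟨x, hx, y, hy, rfl⟩⟩

theorem val_eq_val_mul_val_of_mul_eq_mul {m m' x y : Matrix.SpecialLinearGroup ι K}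
    {σ σ' : Equiv.Perm ι} {u u' : ι → K} (hm : (m : Matrix ι ι K) = monomialMatrix σ u)
    (hm' : (m' : Matrix ι ι K) = monomialMatrix σ' u') (hx : x ∈ iwahoriSubgroup v ι)
    (h : x * m = m' * y) {k l : ι} (hl : σ' l = σ k) : v (u k) = v (u' l) * v (y l k) := by
  have hentry : x (σ k) (σ k) * u k = u' l * y l k := by
    rw [← mul_monomialMatrix_apply, ← monomialMatrix_mul_apply _ σ', hl, ← hm, ← hm',
      ← Matrix.SpecialLinearGroup.coe_mul, h, Matrix.SpecialLinearGroup.coe_mul]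
  simpa [val_diag_eq_one hx] using congr_arg v hentry

theorem monomial_unique_of_mul_eq_mul {m m' x y : Matrix.SpecialLinearGroup ι K}
    {σ σ' : Equiv.Perm ι} {u u' : ι → K} (hm : (m : Matrix ι ι K) = monomialMatrix σ u)
    (hm' : (m' : Matrix ι ι K) = monomialMatrix σ' u') (hx : x ∈ iwahoriSubgroup v ι)
    (hy : y ∈ iwahoriSubgroup v ι) (h : x * m = m' * y) :
    σ = σ' ∧ ∀ k, v (u k) = v (u' k) := by
  obtain ⟨hyle, hylt⟩ := mem_iwahoriSubgroup.1 hy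
  let τ : Equiv.Perm ι := σ'⁻¹ * σ
  have hval (k : ι) : v (u k) = v (u' (τ k)) * v (y (τ k) k) :=
    val_eq_val_mul_val_of_mul_eq_mul hm hm' hx h (by simp [τ])
  have hprod : ∏ k, v (y (τ k) k) = 1 := by
    have hu := prod_val_eq_one_of_coe_eq_monomialMatrix (v := v) hm
    rwa [Fintype.prod_congr _ _ hval, Finset.prod_mul_distrib, Equiv.prod_comp τ fun k => v (u' k),
      prod_val_eq_one_of_coe_eq_monomialMatrix hm', one_mul] at hu
  have hone (k : ι) : v (y (τ k) k) = 1 :=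
    (Finset.prod_eq_one_iff_of_le_one' fun k _ => hyle (τ k) k).1 hprod k (Finset.mem_univ k)
  have hτ : τ = 1 := perm_eq_one_of_forall_le fun k =>
    not_lt.1 fun hlt => (hylt _ _ hlt).ne (hone k)
  exact ⟨(inv_mul_eq_one.1 hτ).symm, fun k => by rw [hval, hone, mul_one, hτ, Equiv.Perm.one_apply]⟩

theorem inv_mul_mem_iwahoriSubgroup_of_val_eq {m m' : Matrix.SpecialLinearGroup ι K}
    {σ : Equiv.Perm ι} {u u' : ι → K} (hm : (m : Matrix ι ι K) = monomialMatrix σ u)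
    (hm' : (m' : Matrix ι ι K) = monomialMatrix σ u') (h : ∀ k, v (u k) = v (u' k)) :
    m⁻¹ * m' ∈ iwahoriSubgroup v ι := by
  have hu (k : ι) : v (u k) ≠ 0 := val_ne_zero_of_coe_eq_monomialMatrix hm k
  have huu' : u * (u' / u) = u' := funext fun k => mul_div_cancel₀ (u' k) ((v.ne_zero_iff).1 (hu k))
  have hmm' : (m' : Matrix ι ι K) = m * diagonal (u' / u) := by
    rw [hm, hm', monomialMatrix_mul_diagonal, huu']
  refine mem_iwahoriSubgroup_of_coe_eq_diagonal (w := u' / u) ?_ fun k => ?_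
  · rw [Matrix.SpecialLinearGroup.coe_mul, hmm', ← Matrix.mul_assoc,
      ← Matrix.SpecialLinearGroup.coe_mul, inv_mul_cancel, Matrix.SpecialLinearGroup.coe_one,
      Matrix.one_mul]
  · rw [Pi.div_apply, map_div₀, h, div_self (h k ▸ hu k)]

theorem monomial_mem_doubleCoset_iff {m m' : Matrix.SpecialLinearGroup ι K}
    {σ σ' : Equiv.Perm ι} {u u' : ι → K} (hm : (m : Matrix ι ι K) = monomialMatrix σ u)
    (hm' : (m' : Matrix ι ι K) = monomialMatrix σ' u') :
    m' ∈ doubleCoset m (iwahoriSubgroup v ι) (iwahoriSubgroup v ι) ↔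
      σ = σ' ∧ ∀ k, v (u k) = v (u' k) := by
  constructor
  · intro h
    obtain ⟨x, hx, y, hy, rfl⟩ := mem_doubleCoset.1 h
    exact monomial_unique_of_mul_eq_mul hm hm' hx (inv_mem hy) (by group)
  · rintro ⟨rfl, h⟩
    exact mem_doubleCoset.2 ⟨1, one_mem _, m⁻¹ * m',
      inv_mul_mem_iwahoriSubgroup_of_val_eq hm hm' h, by group⟩

end DoubleCosets

section AffineWeylLifts

variable {ι K : Type*} [Fintype ι] [DecidableEq ι] [Field K]

/-- The matrix `m` represents the affine Weyl group element `(σ, a)` with respect to `ϖ`: it is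
monomial with entries `± ϖ ^ a k` in the positions `(σ k, k)`. -/
def IsAffineWeylLift (ϖ : K) (σ : Equiv.Perm ι) (a : ι → ℤ)
    (m : Matrix.SpecialLinearGroup ι K) : Prop :=
  ∃ ε : ι → K, (∀ k, ε k = 1 ∨ ε k = -1) ∧
    (m : Matrix ι ι K) = monomialMatrix σ fun k => ε k * ϖ ^ a k

theorem exists_isAffineWeylLift {ϖ : K} (hϖ : ϖ ≠ 0) (σ : Equiv.Perm ι) {a : ι → ℤ}
    (ha : ∑ k, a k = 0) : ∃ m, IsAffineWeylLift ϖ σ a m := by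
  obtain ⟨ε, hε⟩ := exists_prod_eq_sign σ
  have hdet : (monomialMatrix σ fun k => ((ε k : ℤ) : K) * ϖ ^ a k).det = 1 := by
    have hsign : ((σ.sign : ℤ) : K) = ∏ k, ((ε k : ℤ) : K) := by rw [← hε]; push_cast; rfl
    rw [det_monomialMatrix, Finset.prod_mul_distrib, prod_zpow_eq_zpow_sum₀ hϖ, ha, zpow_zero,
      mul_one, ← hsign]
    rw [← Int.cast_mul, Int.units_coe_mul_self, Int.cast_one]
  refine ⟨⟨_, hdet⟩, fun k => ((ε k : ℤ) : K), fun k => ?_, rfl⟩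
  obtain h | h := Int.units_eq_one_or (ε k) <;> simp [h]

end AffineWeylLifts

section Discrete

variable {ι K : Type*} [Fintype ι] [LinearOrder ι] [Field K] {v : Valuation K ℤᵐ⁰} {ϖ : K}

theorem val_sign_mul_zpow (hϖ : v ϖ = WithZero.exp (-1)) {ε : K} (hε : ε = 1 ∨ ε = -1) (a : ℤ) :
    v (ε * ϖ ^ a) = WithZero.exp (-a) := by
  have hv : v ε = 1 := by obtain rfl | rfl := hε <;> simp
  rw [map_mul, hv, one_mul, map_zpow₀, hϖ, ← WithZero.exp_zsmul, smul_neg, smul_eq_mul, mul_one]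

theorem exists_isAffineWeylLift_mem_doubleCoset (hϖ : v ϖ = WithZero.exp (-1))
    {m : Matrix.SpecialLinearGroup ι K} {σ : Equiv.Perm ι} {u : ι → K}
    (hm : (m : Matrix ι ι K) = monomialMatrix σ u) :
    ∃ a : ι → ℤ, ∑ k, a k = 0 ∧ ∃ m', IsAffineWeylLift ϖ σ a m' ∧
      m' ∈ doubleCoset m (iwahoriSubgroup v ι) (iwahoriSubgroup v ι) := by
  have hu (k : ι) : v (u k) = v ϖ ^ (-WithZero.log (v (u k))) := by
    rw [hϖ, ← WithZero.exp_zsmul, smul_neg, neg_smul, neg_neg, smul_eq_mul, mul_one,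
      WithZero.exp_log (val_ne_zero_of_coe_eq_monomialMatrix hm k)]
  have hϖ0 : v ϖ ≠ 0 := hϖ ▸ WithZero.exp_ne_zero
  have hsum : ∑ k, -WithZero.log (v (u k)) = 0 := by
    have hprod := prod_val_eq_one_of_coe_eq_monomialMatrix (v := v) hm
    rw [Fintype.prod_congr _ _ hu, prod_zpow_eq_zpow_sum₀ hϖ0, hϖ, ← WithZero.exp_zsmul,
      WithZero.exp_eq_one] at hprod
    simpa using hprod
  obtain ⟨m', ε, hε, hm'⟩ := exists_isAffineWeylLift ((v.ne_zero_iff).1 hϖ0) σ hsum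
  refine ⟨_, hsum, m', ⟨ε, hε, hm'⟩, (monomial_mem_doubleCoset_iff hm hm').2 ⟨rfl, fun k => ?_⟩⟩
  rw [val_sign_mul_zpow hϖ (hε k), neg_neg,
    WithZero.exp_log (val_ne_zero_of_coe_eq_monomialMatrix hm k)]

theorem iwahori_bruhat_decomposition_general (hϖ : v ϖ = WithZero.exp (-1)) :
    (∀ g : Matrix.SpecialLinearGroup ι K,
      ∃ (σ : Equiv.Perm ι) (a : ι → ℤ), ∑ k, a k = 0 ∧ ∃ m, IsAffineWeylLift ϖ σ a m ∧
        g ∈ doubleCoset m (iwahoriSubgroup v ι) (iwahoriSubgroup v ι)) ∧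
    (∀ (σ σ' : Equiv.Perm ι) (a a' : ι → ℤ) (m m' : Matrix.SpecialLinearGroup ι K),
      IsAffineWeylLift ϖ σ a m → IsAffineWeylLift ϖ σ' a' m' →
        (∃ g, g ∈ doubleCoset m (iwahoriSubgroup v ι) (iwahoriSubgroup v ι) ∧
          g ∈ doubleCoset m' (iwahoriSubgroup v ι) (iwahoriSubgroup v ι)) →
        σ = σ' ∧ a = a') := by
  constructor
  · intro g
    obtain ⟨σ, u, m, hm, hmg⟩ := exists_monomial_mem_doubleCoset v g
    obtain ⟨a, ha, m', hm', hm'm⟩ := exists_isAffineWeylLift_mem_doubleCoset hϖ hm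
    refine ⟨σ, a, ha, m', hm', ?_⟩
    rw [doubleCoset_eq_of_mem hm'm, doubleCoset_eq_of_mem hmg]
    exact mem_doubleCoset_self _ _ g
  · rintro σ σ' a a' m m' ⟨ε, hε, hm⟩ ⟨ε', hε', hm'⟩ ⟨g, hg, hg'⟩
    have hmem : m' ∈ doubleCoset m (iwahoriSubgroup v ι) (iwahoriSubgroup v ι) := by
      rw [← doubleCoset_eq_of_mem hg, doubleCoset_eq_of_mem hg']
      exact mem_doubleCoset_self _ _ m'
    obtain ⟨hσ, hval⟩ := (monomial_mem_doubleCoset_iff hm hm').1 hmem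
    refine ⟨hσ, funext fun k => ?_⟩
    simpa only [val_sign_mul_zpow hϖ (hε k), val_sign_mul_zpow hϖ (hε' k), WithZero.exp_inj,
      neg_inj] using hval k

end Discrete

section Laurent

variable {F : Type} [Field F] {n : ℕ}

theorem valued_le_one_iff_laurentIsIntegral (f : LaurentSeries F) :
    Valued.v f ≤ 1 ↔ LaurentIsIntegral F f :=
  LaurentSeries.valuation_le_iff_coeff_lt_eq_zero F (D := 0) (f := f)

theorem valued_lt_one_iff (f : LaurentSeries F) :
    Valued.v f < 1 ↔ LaurentIsIntegral F f ∧ f.coeff 0 = 0 := by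
  have hle := LaurentSeries.valuation_le_iff_coeff_lt_eq_zero F (D := 1) (f := f)
  rw [← WithZero.lt_mul_exp_iff_le (by simp), ← WithZero.exp_add, neg_add_cancel,
    WithZero.exp_zero] at hle
  rw [hle, LaurentIsIntegral]
  constructor
  · exact fun h => ⟨fun d hd => h d (by omega), h 0 one_pos⟩
  · rintro ⟨hneg, h0⟩ d hd
    obtain hd | rfl : d < 0 ∨ d = 0 := by omega
    exacts [hneg d hd, h0]

theorem valued_tparam : Valued.v (tparam F) = WithZero.exp (-1 : ℤ) :=
  LaurentSeries.valuation_single_zpow F 1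

theorem coe_iwahoriSubgroup : (iwahoriSubgroup (Valued.v : Valuation (LaurentSeries F) ℤᵐ⁰)
    (Fin n) : Set (Matrix.SpecialLinearGroup (Fin n) (LaurentSeries F))) = Iwahori F n := by
  ext g
  simp only [SetLike.mem_coe, mem_iwahoriSubgroup, valued_le_one_iff_laurentIsIntegral,
    valued_lt_one_iff, Iwahori, Set.mem_ofPred_eq]
  exact and_congr_right fun h => forall₃_congr fun i j _ => and_iff_right (h i j)

theorem isAffineLifting_iff {σ : Equiv.Perm (Fin n)} {a : Fin n → ℤ}
    {m : Matrix.SpecialLinearGroup (Fin n) (LaurentSeries F)} :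
    IsAffineLifting F n σ a m ↔ IsAffineWeylLift (tparam F) σ a m :=
  exists_congr fun _ => and_congr_right fun _ => Matrix.ext_iff

end Laurent

theorem iwahori_bruhat_decomposition (F : Type) [Field F] (n : ℕ) (hn : 2 ≤ n) :
    (∀ g : Matrix.SpecialLinearGroup (Fin n) (LaurentSeries F),
      ∃ (σ : Equiv.Perm (Fin n)) (a : Fin n → ℤ), (∑ k, a k) = 0 ∧
        ∃ m, IsAffineLifting F n σ a m ∧
          ∃ d ∈ Iwahori F n, ∃ d' ∈ Iwahori F n, g = d * m * d') ∧
    (∀ (σ σ' : Equiv.Perm (Fin n)) (a a' : Fin n → ℤ),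
      (∑ k, a k) = 0 → (∑ k, a' k) = 0 →
      ∀ m m', IsAffineLifting F n σ a m → IsAffineLifting F n σ' a' m' →
        (∃ g, (∃ d ∈ Iwahori F n, ∃ d' ∈ Iwahori F n, g = d * m * d') ∧
              (∃ d ∈ Iwahori F n, ∃ d' ∈ Iwahori F n, g = d * m' * d')) →
        σ = σ' ∧ a = a') := by
  obtain ⟨hexists, hunique⟩ :=
    iwahori_bruhat_decomposition_general (ι := Fin n) (valued_tparam (F := F))
  simp only [mem_doubleCoset, coe_iwahoriSubgroup, ← isAffineLifting_iff] at hexists hunique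
  exact ⟨hexists, fun σ σ' a a' _ _ => hunique σ σ' a a'⟩
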